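/- For all real numbers x, w ∈ ℝ and every β > 0, the inequality x·|x+w|^{β}·sgn(x+w) ≥ 2^{−β}·|x|^{1+β} − (2 + 2·3^{β})·|w|^{1+β} holds. -/

import Mathlib

/-! Fix `r ≥ 1` and compare `|x|` with `r |w|`. If `r |w| < |x|`, the disturbance cannot change the
sign of the argument, so the pairing is at least `|x| (|x| - |w|)^β`, which is comparable to
`|x|^(1 + β)`. If `|x| ≤ r |w|`, both the coercive term and the pairing are bounded by multiples of
`|w|^(1 + β)`. The constants `2^(-β)` and `2 + 2 * 3^β` come from `r = 2`. -/

/-- The signed power `⌈y⌋^β = |y|^β sgn y` of a real number. As `Real.sign 0 = 0`, it vanishes at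
`y = 0` for every `β`, even where `0 ^ β ≠ 0`. -/
noncomputable def signedPow (y β : ℝ) : ℝ :=
  |y| ^ β * Real.sign y

section

variable {x w β r : ℝ}

theorem abs_signedPow_le (y β : ℝ) : |signedPow y β| ≤ |y| ^ β := by
  have hsign : |Real.sign y| ≤ 1 := by
    rcases Real.sign_apply_eq y with h | h | h <;> norm_num [h]
  rw [signedPow, abs_mul, Real.abs_rpow_of_nonneg (abs_nonneg y), abs_abs]
  exact mul_le_of_le_one_right (by positivity) hsign

theorem mul_sign_add_eq_abs (h : |w| < |x|) : x * Real.sign (x + w) = |x| := by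
  obtain ⟨hneg, hpos⟩ := abs_lt.mp h
  rcases le_total 0 x with hx | hx
  · rw [abs_of_nonneg hx] at hneg ⊢
    rw [Real.sign_of_pos (by linarith), mul_one]
  · rw [abs_of_nonpos hx] at hpos ⊢
    rw [Real.sign_of_neg (by linarith), mul_neg_one]

theorem abs_mul_rpow_abs_sub_abs_le_mul_signedPow (hβ : 0 ≤ β) (h : |w| < |x|) :
    |x| * (|x| - |w|) ^ β ≤ x * signedPow (x + w) β := by
  have htri : |x| - |w| ≤ |x + w| := by simpa using abs_sub_abs_le_abs_sub x (-w)
  calc |x| * (|x| - |w|) ^ β ≤ |x| * |x + w| ^ β := by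
        have := sub_nonneg.mpr h.le
        gcongr
    _ = x * signedPow (x + w) β := by
        rw [signedPow, mul_left_comm, mul_sign_add_eq_abs h, mul_comm]

theorem neg_abs_mul_rpow_abs_add_abs_le_mul_signedPow (x w : ℝ) (hβ : 0 ≤ β) :
    -(|x| * (|x| + |w|) ^ β) ≤ x * signedPow (x + w) β := by
  refine neg_le_of_abs_le ?_
  calc |x * signedPow (x + w) β| = |x| * |signedPow (x + w) β| := abs_mul _ _
    _ ≤ |x| * |x + w| ^ β := by gcongr; exact abs_signedPow_le _ _
    _ ≤ |x| * (|x| + |w|) ^ β := by gcongr; exact abs_add_le x w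

theorem rpow_mul_rpow_one_add {a c : ℝ} (ha : 0 ≤ a) (hc : 0 ≤ c) (hβ : 1 + β ≠ 0) :
    c ^ β * a ^ (1 + β) = a * (c * a) ^ β := by
  rw [Real.mul_rpow hc ha, Real.rpow_one_add' ha hβ, mul_left_comm]

theorem rpow_mul_rpow_one_add_le {a b : ℝ} (ha : 0 ≤ a) (hβ : 0 < 1 + β) (hr : 1 ≤ r)
    (h : a ≤ r * b) :
    ((r - 1) / r) ^ β * a ^ (1 + β) ≤ r * (r - 1) ^ β * b ^ (1 + β) := by
  have hr0 : 0 < r := by linarith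
  have hr1 : 0 ≤ r - 1 := sub_nonneg.mpr hr
  have hb : 0 ≤ b := nonneg_of_mul_nonneg_right (ha.trans h) hr0
  calc ((r - 1) / r) ^ β * a ^ (1 + β) ≤ ((r - 1) / r) ^ β * (r * b) ^ (1 + β) := by gcongr
    _ = r * b * ((r - 1) / r * (r * b)) ^ β :=
        rpow_mul_rpow_one_add (by positivity) (by positivity) hβ.ne'
    _ = r * (b * ((r - 1) * b) ^ β) := by
        rw [← mul_assoc ((r - 1) / r), div_mul_cancel₀ _ hr0.ne', mul_assoc]
    _ = r * (r - 1) ^ β * b ^ (1 + β) := by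
        rw [← rpow_mul_rpow_one_add hb hr1 hβ.ne', mul_assoc]

theorem rpow_mul_abs_rpow_one_add_le_mul_signedPow (hβ : 0 ≤ β) (hr : 1 ≤ r)
    (h : r * |w| < |x|) :
    ((r - 1) / r) ^ β * |x| ^ (1 + β) ≤ x * signedPow (x + w) β := by
  have hr0 : 0 < r := by linarith
  have hratio : 0 ≤ (r - 1) / r := div_nonneg (sub_nonneg.mpr hr) hr0.le
  have hwx : |w| < |x| := (le_mul_of_one_le_left (abs_nonneg w) hr).trans_lt h
  have hgap : (r - 1) / r * |x| ≤ |x| - |w| := by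
    rw [div_mul_eq_mul_div, div_le_iff₀ hr0]
    linarith
  calc ((r - 1) / r) ^ β * |x| ^ (1 + β) = |x| * ((r - 1) / r * |x|) ^ β :=
        rpow_mul_rpow_one_add (abs_nonneg x) hratio (by positivity)
    _ ≤ |x| * (|x| - |w|) ^ β := by gcongr
    _ ≤ x * signedPow (x + w) β := abs_mul_rpow_abs_sub_abs_le_mul_signedPow hβ hwx

theorem neg_mul_abs_rpow_one_add_le_mul_signedPow (hβ : 0 ≤ β) (hr : 0 ≤ r)
    (h : |x| ≤ r * |w|) :
    -(r * (r + 1) ^ β * |w| ^ (1 + β)) ≤ x * signedPow (x + w) β := by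
  have hsum : |x| + |w| ≤ (r + 1) * |w| := by linarith
  calc -(r * (r + 1) ^ β * |w| ^ (1 + β)) = -(r * |w| * ((r + 1) * |w|) ^ β) := by
        rw [mul_assoc, rpow_mul_rpow_one_add (abs_nonneg w) (by positivity) (by positivity),
          mul_assoc]
    _ ≤ -(|x| * (|x| + |w|) ^ β) := by gcongr
    _ ≤ x * signedPow (x + w) β := neg_abs_mul_rpow_abs_add_abs_le_mul_signedPow x w hβ

theorem signed_power_robustness_general (x w : ℝ) (hβ : 0 ≤ β) (hr : 1 ≤ r) :
    ((r - 1) / r) ^ β * |x| ^ (1 + β) - r * ((r - 1) ^ β + (r + 1) ^ β) * |w| ^ (1 + β)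
      ≤ x * signedPow (x + w) β := by
  rcases lt_or_ge (r * |w|) |x| with h | h
  · have hcoercive := rpow_mul_abs_rpow_one_add_le_mul_signedPow hβ hr h
    have herror : 0 ≤ r * ((r - 1) ^ β + (r + 1) ^ β) * |w| ^ (1 + β) := by
      have := sub_nonneg.mpr hr
      positivity
    linarith
  · have hcoercive := rpow_mul_rpow_one_add_le (abs_nonneg x) (by positivity) hr h
    have hpairing := neg_mul_abs_rpow_one_add_le_mul_signedPow hβ (zero_le_one.trans hr) h
    linarith

end

/-- **Scalar robustness inequality for the signed power.**
For all `x, w ∈ ℝ` and every `β > 0`,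
`x·⌈x+w⌋^β = x·|x+w|^β·sgn(x+w) ≥ 2^{−β}|x|^{1+β} − (2 + 2·3^β)|w|^{1+β}`. -/
theorem signed_power_robustness (x w β : ℝ) (hβ : 0 < β) :
    (2:ℝ) ^ (-β) * |x| ^ (1 + β) - (2 + 2 * (3:ℝ) ^ β) * |w| ^ (1 + β)
      ≤ x * (|x + w| ^ β * Real.sign (x + w)) := by
  have hcoeff : ((2 - 1) / 2 : ℝ) ^ β = 2 ^ (-β) := by
    rw [Real.rpow_neg_eq_inv_rpow]; norm_num
  have hconst : (2 : ℝ) * ((2 - 1) ^ β + (2 + 1) ^ β) = 2 + 2 * 3 ^ β := by norm_num [mul_add]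
  simpa only [hcoeff, hconst, signedPow] using signed_power_robustness_general x w hβ.le one_le_two
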